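/- arXiv:2104.06612 — 3 statements merged into one kernel-verified Lean document; each statement's English description precedes it below -/
import Mathlib

section
/- Let P and Q be probability measures on a measurable space X with P absolutely continuous with respect to Q and with finite Kullback–Leibler divergence D_KL(P‖Q). Then for every bounded measurable function T : X → ℝ, one has ∫ T dP − log (∫ e^T dQ) ≤ D_KL(P‖Q). -/
open MeasureTheory

/-- The Kullback–Leibler divergence `∫ log (dP/dQ) dP`. -/
noncomputable def klDiv {X : Type*} [MeasurableSpace X]
    (P Q : Measure X) : ℝ :=
  ∫ x, Real.log ((P.rnDeriv Q x).toReal) ∂P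

section

variable {X : Type*} [MeasurableSpace X] {P Q : Measure X} {T : X → ℝ}

theorem klDiv_nonneg_of_measure_univ_eq [IsFiniteMeasure P] [IsFiniteMeasure Q] (hPQ : P ≪ Q)
    (h_univ : P Set.univ = Q Set.univ) : 0 ≤ klDiv P Q :=
  ENNReal.toReal_nonneg.trans_eq (InformationTheory.toReal_klDiv_of_measure_eq hPQ h_univ)

theorem klDiv_tilted_right [IsProbabilityMeasure P] [SigmaFinite Q] (hPQ : P ≪ Q)
    (hKL : Integrable (llr P Q) P) (hT : Integrable T P)
    (hexp : Integrable (fun x ↦ Real.exp (T x)) Q) :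
    klDiv P (Q.tilted T) = klDiv P Q - (∫ x, T x ∂P - Real.log (∫ x, Real.exp (T x) ∂Q)) :=
  (integral_llr_tilted_right hPQ hT hexp hKL).trans (sub_add _ _ _)

/-- The gap in the inequality is the divergence `klDiv P (Q.tilted T)` from `P` to the Gibbs
measure `e^T Q / ∫ e^T dQ`, which is nonnegative. -/
theorem donsker_varadhan_lower_bound_general [IsProbabilityMeasure P] [SigmaFinite Q]
    (hPQ : P ≪ Q) (hKL : Integrable (llr P Q) P) (hT : Integrable T P)
    (hexp : Integrable (fun x ↦ Real.exp (T x)) Q) :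
    ∫ x, T x ∂P - Real.log (∫ x, Real.exp (T x) ∂Q) ≤ klDiv P Q := by
  have : NeZero Q := ⟨fun hQ ↦ IsProbabilityMeasure.ne_zero P <|
    Measure.absolutelyContinuous_zero_iff.mp (hQ ▸ hPQ)⟩
  have : IsProbabilityMeasure (Q.tilted T) := isProbabilityMeasure_tilted hexp
  have hP_tilted : P ≪ Q.tilted T := hPQ.trans (absolutelyContinuous_tilted hexp)
  have h_gap : 0 ≤ klDiv P (Q.tilted T) :=
    klDiv_nonneg_of_measure_univ_eq hP_tilted (by simp only [measure_univ])
  rwa [klDiv_tilted_right hPQ hKL hT hexp, sub_nonneg] at h_gap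

theorem integrable_exp_of_abs_le [IsFiniteMeasure Q] (hT : AEMeasurable T Q) {C : ℝ}
    (hC : ∀ᵐ x ∂Q, |T x| ≤ C) : Integrable (fun x ↦ Real.exp (T x)) Q := by
  simpa only [one_mul] using ProbabilityTheory.integrable_exp_mul_of_mem_Icc (t := 1) hT
    (hC.mono fun _ hx ↦ abs_le.mp hx)

end

/-- Donsker–Varadhan lower bound: for every bounded measurable `T`,
`∫ T dP − log (∫ e^T dQ) ≤ D_KL(P‖Q)`. -/
theorem donsker_varadhan_lower_bound
    {X : Type*} [MeasurableSpace X] (P Q : Measure X)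
    [IsProbabilityMeasure P] [IsProbabilityMeasure Q]
    (hPQ : P ≪ Q)
    (hKL : Integrable (fun x => Real.log ((P.rnDeriv Q x).toReal)) P)
    (T : X → ℝ) (hT : Measurable T) (C : ℝ) (hC : ∀ x, |T x| ≤ C) :
    ∫ x, T x ∂P - Real.log (∫ x, Real.exp (T x) ∂Q) ≤ klDiv P Q :=
  donsker_varadhan_lower_bound_general hPQ hKL
    (.of_bound hT.aestronglyMeasurable C (.of_forall hC))
    (integrable_exp_of_abs_le hT.aemeasurable (.of_forall hC))
end

section
/- (Donsker–Varadhan variational representation.) Let P and Q be probability measures on a measurable space X with P absolutely continuous with respect to Q and with finite Kullback–Leibler divergence. Then D_KL(P‖Q) equals the supremum, over all bounded measurable functions T : X → ℝ, of the quantity ∫ T dP − log (∫ e^T dQ). -/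
open MeasureTheory

/-!
Tilting `Q` by `e ^ T` changes `∫ llr P Q ∂P` by exactly `log ∫ e ^ T ∂Q - ∫ T ∂P`, so the Gibbs
inequality for `P` and the tilted probability measure gives the upper bound. The bound would be
attained at `T = log (dP/dQ)`, which need not be bounded; clamping the density to `[e⁻ᶜ, eᶜ]`
before taking the logarithm gives bounded test functions whose values converge to the divergence
as `c → ∞`, by dominated convergence under `P` and under `Q`.
-/

open Filter Topology

/-- The logarithm of `r` clamped to `[e⁻ᶜ, eᶜ]`, a bounded approximation of `log r`. Clamping `r`
rather than `log r` gives the value `-c` at `r = 0`, where `Real.log` has the junk value `0`. -/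
noncomputable def truncatedLog (c r : ℝ) : ℝ :=
  Real.log (max (Real.exp (-c)) (min (Real.exp c) r))

section TruncatedLog

variable {c r : ℝ}

lemma exp_truncatedLog (c r : ℝ) :
    Real.exp (truncatedLog c r) = max (Real.exp (-c)) (min (Real.exp c) r) :=
  Real.exp_log (lt_max_of_lt_left (Real.exp_pos _))

lemma truncatedLog_of_pos (c : ℝ) (hr : 0 < r) :
    truncatedLog c r = max (-c) (min c (Real.log r)) := by
  apply Real.exp_injective
  rw [exp_truncatedLog, Real.exp_monotone.map_max, Real.exp_monotone.map_min, Real.exp_log hr]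

lemma measurable_truncatedLog (c : ℝ) : Measurable (truncatedLog c) :=
  (measurable_const.max (measurable_const.min measurable_id)).log

lemma abs_truncatedLog_le (hc : 0 ≤ c) (r : ℝ) : |truncatedLog c r| ≤ c := by
  rw [abs_le, ← Real.exp_le_exp, ← Real.exp_le_exp (y := c), exp_truncatedLog]
  exact ⟨le_max_left _ _,
    max_le (Real.exp_le_exp.mpr (neg_le_self hc)) (min_le_left _ _)⟩

lemma abs_truncatedLog_le_abs_log (hc : 0 ≤ c) (hr : 0 < r) :
    |truncatedLog c r| ≤ |Real.log r| := by
  have hlog : 0 ≤ |Real.log r| := abs_nonneg _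
  rw [truncatedLog_of_pos c hr, abs_le]
  exact ⟨le_max_of_le_right (le_min (by linarith) (neg_abs_le _)),
    max_le (by linarith) ((min_le_right _ _).trans (le_abs_self _))⟩

lemma exp_truncatedLog_le_one_add (hc : 0 ≤ c) (hr : 0 ≤ r) :
    Real.exp (truncatedLog c r) ≤ 1 + r := by
  have hexp : Real.exp (-c) ≤ 1 := Real.exp_le_one_iff.mpr (neg_nonpos.mpr hc)
  rw [exp_truncatedLog]
  exact max_le (by linarith) ((min_le_right _ _).trans (by linarith))

lemma tendsto_exp_truncatedLog (hr : 0 ≤ r) :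
    Tendsto (fun c ↦ Real.exp (truncatedLog c r)) atTop (𝓝 r) := by
  have hmin : Tendsto (fun c ↦ min (Real.exp c) r) atTop (𝓝 r) :=
    tendsto_const_nhds.congr' <|
      (Real.tendsto_exp_atTop.eventually_ge_atTop r).mono fun _ h ↦ (min_eq_right h).symm
  simpa only [exp_truncatedLog, max_eq_right hr] using
    Real.tendsto_exp_neg_atTop_nhds_zero.max hmin

lemma tendsto_truncatedLog (hr : 0 < r) :
    Tendsto (fun c ↦ truncatedLog c r) atTop (𝓝 (Real.log r)) := by
  simpa only [Real.log_exp] using (tendsto_exp_truncatedLog hr.le).log hr.ne'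

end TruncatedLog

section Measure

variable {X : Type*} [MeasurableSpace X]

lemma tendsto_integral_truncatedLog {μ : Measure X} {f : X → ℝ} (hf : AEMeasurable f μ)
    (hpos : ∀ᵐ x ∂μ, 0 < f x) (hlog : Integrable (fun x ↦ Real.log (f x)) μ) :
    Tendsto (fun c ↦ ∫ x, truncatedLog c (f x) ∂μ) atTop (𝓝 (∫ x, Real.log (f x) ∂μ)) := by
  refine tendsto_integral_filter_of_dominated_convergence (fun x ↦ |Real.log (f x)|)
    (.of_forall fun c ↦ ((measurable_truncatedLog c).comp_aemeasurable hf).aestronglyMeasurable)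
    ?_ hlog.abs (hpos.mono fun x ↦ tendsto_truncatedLog)
  filter_upwards [eventually_ge_atTop 0] with c hc
  exact hpos.mono fun x ↦ abs_truncatedLog_le_abs_log hc

lemma tendsto_integral_exp_truncatedLog {μ : Measure X} [IsFiniteMeasure μ] {f : X → ℝ}
    (hf : Integrable f μ) (hnonneg : 0 ≤ᵐ[μ] f) :
    Tendsto (fun c ↦ ∫ x, Real.exp (truncatedLog c (f x)) ∂μ) atTop (𝓝 (∫ x, f x ∂μ)) := by
  refine tendsto_integral_filter_of_dominated_convergence (fun x ↦ 1 + f x)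
    (.of_forall fun c ↦
      ((measurable_truncatedLog c).exp.comp_aemeasurable hf.aemeasurable).aestronglyMeasurable)
    ?_ ((integrable_const 1).add hf) (hnonneg.mono fun x ↦ tendsto_exp_truncatedLog)
  filter_upwards [eventually_ge_atTop 0] with c hc
  filter_upwards [hnonneg] with x hx
  rw [Real.norm_of_nonneg (Real.exp_pos _).le]
  exact exp_truncatedLog_le_one_add hc hx

lemma integrable_exp_of_measurable_of_abs_le {μ : Measure X} [IsFiniteMeasure μ] {T : X → ℝ}
    {C : ℝ} (hT : Measurable T) (hC : ∀ x, |T x| ≤ C) :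
    Integrable (fun x ↦ Real.exp (T x)) μ :=
  .of_bound hT.exp.aestronglyMeasurable (Real.exp C) <| .of_forall fun x ↦ by
    rw [Real.norm_of_nonneg (Real.exp_pos _).le]
    exact Real.exp_le_exp.mpr (le_of_abs_le (hC x))

variable {P Q : Measure X}

lemma ae_toReal_rnDeriv_pos [SigmaFinite P] [SigmaFinite Q] (hPQ : P ≪ Q) :
    ∀ᵐ x ∂P, 0 < (P.rnDeriv Q x).toReal := by
  filter_upwards [Measure.rnDeriv_pos hPQ, hPQ.ae_le (Measure.rnDeriv_lt_top P Q)] with x hpos hlt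
  exact ENNReal.toReal_pos hpos.ne' hlt.ne

lemma integral_llr_nonneg [IsProbabilityMeasure P] [IsProbabilityMeasure Q] (hPQ : P ≪ Q)
    (hllr : Integrable (llr P Q) P) : 0 ≤ ∫ x, llr P Q x ∂P := by
  simpa using InformationTheory.integral_llr_add_sub_measure_univ_nonneg hPQ hllr

lemma integral_sub_log_integral_exp_le_klDiv [IsProbabilityMeasure P] [SigmaFinite Q]
    (hPQ : P ≪ Q) (hllr : Integrable (llr P Q) P) {T : X → ℝ} (hT : Integrable T P)
    (hexp : Integrable (fun x ↦ Real.exp (T x)) Q) :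
    ∫ x, T x ∂P - Real.log (∫ x, Real.exp (T x) ∂Q) ≤ klDiv P Q := by
  have : NeZero Q := ⟨fun hQ ↦ IsProbabilityMeasure.ne_zero P <|
    Measure.absolutelyContinuous_zero_iff.mp (hQ ▸ hPQ)⟩
  have : IsProbabilityMeasure (Q.tilted T) := isProbabilityMeasure_tilted hexp
  have hgibbs : 0 ≤ ∫ x, llr P (Q.tilted T) x ∂P :=
    integral_llr_nonneg (hPQ.trans (absolutelyContinuous_tilted hexp))
      (integrable_llr_tilted_right hPQ hT hllr hexp)
  have htilt : ∫ x, llr P (Q.tilted T) x ∂P =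
      klDiv P Q - ∫ x, T x ∂P + Real.log (∫ x, Real.exp (T x) ∂Q) :=
    integral_llr_tilted_right hPQ hT hexp hllr
  linarith

lemma tendsto_integral_truncatedLog_sub_log_integral_exp [IsProbabilityMeasure P]
    [IsFiniteMeasure Q] (hPQ : P ≪ Q) (hllr : Integrable (llr P Q) P) :
    Tendsto (fun c ↦ ∫ x, truncatedLog c (P.rnDeriv Q x).toReal ∂P -
      Real.log (∫ x, Real.exp (truncatedLog c (P.rnDeriv Q x).toReal) ∂Q))
      atTop (𝓝 (klDiv P Q)) := by
  have hP : Tendsto (fun c ↦ ∫ x, truncatedLog c (P.rnDeriv Q x).toReal ∂P) atTop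
      (𝓝 (klDiv P Q)) :=
    tendsto_integral_truncatedLog (Measure.measurable_rnDeriv P Q).ennreal_toReal.aemeasurable
      (ae_toReal_rnDeriv_pos hPQ) hllr
  have hQ : Tendsto (fun c ↦ ∫ x, Real.exp (truncatedLog c (P.rnDeriv Q x).toReal) ∂Q) atTop
      (𝓝 1) := by
    simpa only [Measure.integral_toReal_rnDeriv hPQ, probReal_univ] using
      tendsto_integral_exp_truncatedLog (Measure.integrable_toReal_rnDeriv (μ := P) (ν := Q))
        (.of_forall fun _ ↦ ENNReal.toReal_nonneg)
  simpa only [Real.log_one, sub_zero] using hP.sub (hQ.log one_ne_zero)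

end Measure

theorem donsker_varadhan_representation_general
    {X : Type*} [MeasurableSpace X] (P Q : Measure X)
    [IsProbabilityMeasure P] [IsFiniteMeasure Q]
    (hPQ : P ≪ Q)
    (hKL : Integrable (fun x => Real.log ((P.rnDeriv Q x).toReal)) P) :
    IsLUB { r : ℝ | ∃ T : X → ℝ, Measurable T ∧ (∃ C : ℝ, ∀ x, |T x| ≤ C) ∧
      r = ∫ x, T x ∂P - Real.log (∫ x, Real.exp (T x) ∂Q) } (klDiv P Q) := by
  refine ⟨?_, fun b hb ↦ ?_⟩
  · rintro _ ⟨T, hT, ⟨C, hC⟩, rfl⟩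
    exact integral_sub_log_integral_exp_le_klDiv hPQ hKL
      (.of_bound hT.aestronglyMeasurable C (.of_forall hC))
      (integrable_exp_of_measurable_of_abs_le hT hC)
  · refine le_of_tendsto (tendsto_integral_truncatedLog_sub_log_integral_exp hPQ hKL) ?_
    filter_upwards [eventually_ge_atTop 0] with c hc
    exact hb ⟨fun x ↦ truncatedLog c (P.rnDeriv Q x).toReal,
      (measurable_truncatedLog c).comp (Measure.measurable_rnDeriv P Q).ennreal_toReal,
      ⟨c, fun x ↦ abs_truncatedLog_le hc _⟩, rfl⟩

/-- Donsker–Varadhan variational representation: `D_KL(P‖Q)` is the supremum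
over bounded measurable functions `T` of `∫ T dP − log (∫ e^T dQ)`. -/
theorem donsker_varadhan_representation
    {X : Type*} [MeasurableSpace X] (P Q : Measure X)
    [IsProbabilityMeasure P] [IsProbabilityMeasure Q]
    (hPQ : P ≪ Q)
    (hKL : Integrable (fun x => Real.log ((P.rnDeriv Q x).toReal)) P) :
    klDiv P Q =
      sSup { r : ℝ | ∃ T : X → ℝ, Measurable T ∧ (∃ C : ℝ, ∀ x, |T x| ≤ C) ∧
        r = ∫ x, T x ∂P - Real.log (∫ x, Real.exp (T x) ∂Q) } := by
  have hlub := donsker_varadhan_representation_general P Q hPQ hKL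
  exact (hlub.csSup_eq hlub.nonempty).symm
end

section
/- (f-divergence / Nguyen–Wainwright bound for the KL divergence.) Let P and Q be probability measures on a measurable space X with P absolutely continuous with respect to Q and with finite Kullback–Leibler divergence. Then for every bounded measurable function T : X → ℝ, one has ∫ T dP − ∫ e^{T−1} dQ ≤ D_KL(P‖Q). -/
open MeasureTheory

/-!
For `r ≥ 0` the convex function `r ↦ r log r` has Legendre transform `t ↦ exp (t - 1)`, so the
Fenchel–Young inequality reads `r t ≤ r log r + exp (t - 1)`. Take `r = dP/dQ` and `t = T` pointwise
and integrate against `Q`: the factor `dP/dQ` turns the terms it multiplies into integrals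
against `P`.
-/

theorem mul_le_mul_log_add_exp_sub_one {r : ℝ} (hr : 0 ≤ r) (t : ℝ) :
    r * t ≤ r * Real.log r + Real.exp (t - 1) := by
  rcases hr.eq_or_lt with rfl | hr_pos
  · simpa using Real.exp_nonneg (t - 1)
  · have tangent_line : t - Real.log r ≤ Real.exp (t - 1) / r := by
      calc t - Real.log r = t - 1 - Real.log r + 1 := by ring
        _ ≤ Real.exp (t - 1 - Real.log r) := Real.add_one_le_exp _
        _ = Real.exp (t - 1) / r := by rw [Real.exp_sub, Real.exp_log hr_pos]
    rw [le_div_iff₀ hr_pos] at tangent_line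
    linarith

theorem integrable_exp_of_ae_le {X : Type*} [MeasurableSpace X] {μ : Measure X}
    [IsFiniteMeasure μ] {f : X → ℝ} (hf : AEMeasurable f μ) {b : ℝ} (hb : ∀ᵐ x ∂μ, f x ≤ b) :
    Integrable (fun x => Real.exp (f x)) μ := by
  simpa using ProbabilityTheory.integrable_exp_mul_of_le 1 b zero_le_one hf hb

theorem nguyen_wainwright_bound_general
    {X : Type*} [MeasurableSpace X] {P Q : Measure X}
    [SigmaFinite P] [P.HaveLebesgueDecomposition Q] (hPQ : P ≪ Q)
    (hKL : Integrable (llr P Q) P) {T : X → ℝ} (hT : Integrable T P)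
    (hexp : Integrable (fun x => Real.exp (T x - 1)) Q) :
    ∫ x, T x ∂P - ∫ x, Real.exp (T x - 1) ∂Q ≤ klDiv P Q := by
  have hT_density : Integrable (fun x => (P.rnDeriv Q x).toReal * T x) Q :=
    (integrable_rnDeriv_smul_iff hPQ).mpr hT
  have hKL_density :
      Integrable (fun x => (P.rnDeriv Q x).toReal * Real.log (P.rnDeriv Q x).toReal) Q :=
    (integrable_rnDeriv_mul_log_iff hPQ).mpr hKL
  rw [sub_le_iff_le_add]
  calc ∫ x, T x ∂P
      = ∫ x, (P.rnDeriv Q x).toReal * T x ∂Q := (integral_rnDeriv_smul hPQ).symm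
    _ ≤ ∫ x, ((P.rnDeriv Q x).toReal * Real.log (P.rnDeriv Q x).toReal
          + Real.exp (T x - 1)) ∂Q :=
        integral_mono hT_density (hKL_density.add hexp) fun x =>
          mul_le_mul_log_add_exp_sub_one ENNReal.toReal_nonneg (T x)
    _ = ∫ x, (P.rnDeriv Q x).toReal * Real.log (P.rnDeriv Q x).toReal ∂Q
          + ∫ x, Real.exp (T x - 1) ∂Q := integral_add hKL_density hexp
    _ = klDiv P Q + ∫ x, Real.exp (T x - 1) ∂Q := by
        rw [integral_rnDeriv_mul_log hPQ]; rfl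

/-- Nguyen–Wainwright (f-divergence) lower bound for the KL divergence:
`∫ T dP − ∫ e^{T−1} dQ ≤ D_KL(P‖Q)` for every bounded measurable `T`. -/
theorem nguyen_wainwright_bound
    {X : Type*} [MeasurableSpace X] (P Q : Measure X)
    [IsProbabilityMeasure P] [IsProbabilityMeasure Q]
    (hPQ : P ≪ Q)
    (hKL : Integrable (fun x => Real.log ((P.rnDeriv Q x).toReal)) P)
    (T : X → ℝ) (hT : Measurable T) (C : ℝ) (hC : ∀ x, |T x| ≤ C) :
    ∫ x, T x ∂P - ∫ x, Real.exp (T x - 1) ∂Q ≤ klDiv P Q :=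
  nguyen_wainwright_bound_general hPQ hKL
    (.of_bound hT.aestronglyMeasurable C (.of_forall hC))
    (integrable_exp_of_ae_le (hT.sub_const 1).aemeasurable
      (.of_forall fun x => sub_le_sub_right (le_of_abs_le (hC x)) 1))
end
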